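/- arXiv:0807.4334 — 5 statements merged into one kernel-verified Lean document; each statement's English description precedes it below -/
import Mathlib

section
/- Let n, k ≥ 1 be integers, let n_1,…,n_k be positive integers with n < n_1 + … + n_k, and let a_{ij} (1 ≤ i ≤ n, 1 ≤ j ≤ k) be integers. If ∏_{i=1}^{n} (1 + Σ_{j=1}^{k} a_{ij} x̄_j) = 1 in the ring ℤ[x_1,…,x_k]/(x_1^{n_1+1},…,x_k^{n_k+1}), then there exists an index j ∈ {1,…,k} such that a_{ij} = 0 for every i = 1,…,n. -/
open MvPolynomial

/-- The ideal `(x_1^{n_1+1}, …, x_k^{n_k+1})` of `ℤ[x_1,…,x_k]`. -/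
noncomputable def truncIdeal (k : ℕ) (N : Fin k → ℕ) : Ideal (MvPolynomial (Fin k) ℤ) :=
  Ideal.span (Set.range fun j => X j ^ (N j + 1))

/-!
Write `S_j = ∑ i, a i j` and let `P` be the product of the total Chern classes, lifted to the
polynomial ring. At the origin, `∂_p P` is `S_p` and `∂_p ∂_q P` is
`S_p * S_q - ∑ i, a i p * a i q`. These values are multiples of the coefficients of `x_p` and
`x_p x_q`, which vanish in `P - 1` as soon as `x̄_p x̄_q ≠ 0`. The columns `p` and `q` of `a` are
then orthogonal.

If `2 ≤ n_j` for some `j`, then column `j` is orthogonal to itself, hence zero. Otherwise more than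
`n` columns in an `n`-dimensional space are pairwise orthogonal, so one of them is zero.
-/

open Finsupp (single)
open scoped Matrix

section Derivation

variable {R A B ι : Type*} [CommSemiring R] [CommSemiring A] [CommRing B] [Algebra R A]
  (φ : A →+* B) (D E : Derivation R A A) {s : Finset ι} {f : ι → A}

lemma map_derivation_prod (hf : ∀ i ∈ s, φ (f i) = 1) :
    φ (D (∏ i ∈ s, f i)) = ∑ i ∈ s, φ (D (f i)) := by
  classical
  induction s using Finset.induction_on with
  | empty => simp
  | insert i s hi ih =>
    obtain ⟨hfi, hfs⟩ := (Finset.forall_mem_insert _ _ _).mp hf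
    have hprod : φ (∏ j ∈ s, f j) = 1 := by rw [map_prod, Finset.prod_eq_one hfs]
    simp only [Finset.prod_insert hi, Finset.sum_insert hi, Derivation.leibniz, smul_eq_mul,
      map_add, map_mul, hfi, hprod, ih hfs]
    ring

lemma map_derivation_derivation_prod (hf : ∀ i ∈ s, φ (f i) = 1) :
    φ (D (E (∏ i ∈ s, f i))) =
      (∑ i ∈ s, φ (D (f i))) * (∑ i ∈ s, φ (E (f i))) - ∑ i ∈ s, φ (D (f i)) * φ (E (f i)) +
        ∑ i ∈ s, φ (D (E (f i))) := by
  classical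
  induction s using Finset.induction_on with
  | empty => simp
  | insert i s hi ih =>
    obtain ⟨hfi, hfs⟩ := (Finset.forall_mem_insert _ _ _).mp hf
    have hprod : φ (∏ j ∈ s, f j) = 1 := by rw [map_prod, Finset.prod_eq_one hfs]
    simp only [Finset.prod_insert hi, Finset.sum_insert hi, Derivation.leibniz, smul_eq_mul,
      map_add, map_mul, hfi, hprod, ih hfs, map_derivation_prod φ _ hfs]
    ring

end Derivation

section Orthogonal

variable {R ι κ : Type*} [CommRing R] [LinearOrder R] [IsStrictOrderedRing R] [Fintype ι]
  {v : κ → ι → R}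

lemma linearIndependent_of_pairwise_dotProduct_eq_zero (hv : ∀ j, v j ≠ 0)
    (horth : Pairwise fun p q => v p ⬝ᵥ v q = 0) : LinearIndependent R v := by
  refine linearIndependent_iff'.mpr fun s g hg j hj => ?_
  have hdot : g j * (v j ⬝ᵥ v j) = 0 := calc
    g j * (v j ⬝ᵥ v j) = ∑ i ∈ s, g i * (v i ⬝ᵥ v j) :=
      (Finset.sum_eq_single_of_mem (f := fun i => g i * (v i ⬝ᵥ v j)) j hj fun i _ hij => by
        rw [horth hij, mul_zero]).symm
    _ = (∑ i ∈ s, g i • v i) ⬝ᵥ v j := by simp only [sum_dotProduct, smul_dotProduct, smul_eq_mul]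
    _ = 0 := by rw [hg, zero_dotProduct]
  exact (mul_eq_zero.mp hdot).resolve_right (dotProduct_self_eq_zero.not.mpr (hv j))

lemma exists_eq_zero_of_pairwise_dotProduct_eq_zero [Fintype κ]
    (hcard : Fintype.card ι < Fintype.card κ) (horth : Pairwise fun p q => v p ⬝ᵥ v q = 0) :
    ∃ j, v j = 0 := by
  by_contra! hv
  have hle := (linearIndependent_of_pairwise_dotProduct_eq_zero hv horth).fintype_card_le_finrank
  rw [Module.finrank_fintype_fun_eq_card] at hle
  exact hle.not_gt hcard

end Orthogonal

section TruncatedPolynomial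

variable {R σ ι : Type*} [CommRing R]

variable (R) in
/-- The ideal generated by the powers `x_j ^ (N j + 1)`, for arbitrary coefficients and variables:
the quotient by it generalizes the cohomology ring of a product of projective spaces. It is
`truncIdeal` when `R = ℤ` and `σ = Fin k`. -/
noncomputable def powerIdeal (N : σ → ℕ) : Ideal (MvPolynomial σ R) :=
  Ideal.span (Set.range fun j => X j ^ (N j + 1))

/-- The total Chern class `1 + ∑ j, a j * x_j` of the line bundle with exponents `a`, lifted to the
polynomial ring. -/
noncomputable def lineBundleChern [Fintype σ] (a : σ → R) : MvPolynomial σ R :=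
  1 + ∑ j, C (a j) * X j

lemma coeff_eq_zero_of_mem_powerIdeal {N : σ → ℕ} {f : MvPolynomial σ R}
    (hf : f ∈ powerIdeal R N) {m : σ →₀ ℕ} (hm : ∀ j, m j ≤ N j) : coeff m f = 0 := by
  have hmonomial : powerIdeal R N = Ideal.span ((fun m => monomial m (1 : R)) ''
      Set.range fun j => single j (N j + 1)) := by
    simp only [powerIdeal, X_pow_eq_monomial, ← Set.range_comp, Function.comp_def]
  rw [hmonomial, mem_ideal_span_monomial_image] at hf
  by_contra hne
  obtain ⟨_, ⟨j, rfl⟩, hj⟩ := hf m (mem_support_iff.mpr hne)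
  exact (Finsupp.single_le_iff.mp hj).not_gt (Nat.lt_succ_of_le (hm j))

lemma constantCoeff_pderiv (p : σ) (f : MvPolynomial σ R) :
    constantCoeff (pderiv p f) = coeff (single p 1) f := by
  simp [constantCoeff_eq, coeff_pderiv]

lemma constantCoeff_pderiv_pderiv (p q : σ) (f : MvPolynomial σ R) :
    constantCoeff (pderiv p (pderiv q f)) =
      coeff (single p 1 + single q 1) f * ((single p 1 : σ →₀ ℕ) q + 1) := by
  simp [constantCoeff_eq, coeff_pderiv]

section LineBundle

variable [Fintype σ] (a : σ → R)

lemma constantCoeff_lineBundleChern : constantCoeff (lineBundleChern a) = 1 := by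
  simp [lineBundleChern]

lemma pderiv_lineBundleChern (p : σ) : pderiv p (lineBundleChern a) = C (a p) := by
  classical
  simp [lineBundleChern, pderiv_X, Pi.single_apply]

end LineBundle

lemma dotProduct_eq_zero_of_prod_lineBundleChern_eq_one [Fintype σ] [Fintype ι] {N : σ → ℕ}
    {a : ι → σ → R}
    (h : ∏ i, Ideal.Quotient.mk (powerIdeal R N) (lineBundleChern (a i)) = 1)
    {p q : σ} (hpq : ∀ j, (single p 1 + single q 1 : σ →₀ ℕ) j ≤ N j) : (a · p) ⬝ᵥ (a · q) = 0 := by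
  set P := ∏ i, lineBundleChern (a i) with hP
  have hmem : P - 1 ∈ powerIdeal R N := by
    rwa [← Ideal.Quotient.eq, map_prod, map_one]
  have hfirst : constantCoeff (pderiv p P) = 0 := calc
    _ = constantCoeff (pderiv p (P - 1)) := by rw [map_sub, pderiv_one, sub_zero]
    _ = 0 := by
      rw [constantCoeff_pderiv]
      exact coeff_eq_zero_of_mem_powerIdeal hmem fun j => (Nat.le_add_right _ _).trans (hpq j)
  have hsecond : constantCoeff (pderiv p (pderiv q P)) = 0 := calc
    _ = constantCoeff (pderiv p (pderiv q (P - 1))) := by rw [map_sub, pderiv_one, sub_zero]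
    _ = 0 := by
      rw [constantCoeff_pderiv_pderiv, coeff_eq_zero_of_mem_powerIdeal hmem hpq, zero_mul]
  have hone : ∀ i ∈ Finset.univ, constantCoeff (lineBundleChern (a i)) = 1 :=
    fun i _ => constantCoeff_lineBundleChern (a i)
  rw [hP, map_derivation_prod _ _ hone] at hfirst
  rw [hP, map_derivation_derivation_prod _ _ _ hone, hfirst] at hsecond
  simpa [pderiv_lineBundleChern, dotProduct] using hsecond

end TruncatedPolynomial

theorem stmt6_general {R σ ι : Type*} [CommRing R] [LinearOrder R] [IsStrictOrderedRing R]
    [Fintype σ] [Fintype ι] {N : σ → ℕ} (hlt : Fintype.card ι < ∑ j, N j) {a : ι → σ → R}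
    (h : ∏ i, Ideal.Quotient.mk (powerIdeal R N) (lineBundleChern (a i)) = 1) :
    ∃ j, N j ≠ 0 ∧ ∀ i, a i j = 0 := by
  classical
  by_cases hlarge : ∃ j, 2 ≤ N j
  · obtain ⟨j, hj⟩ := hlarge
    have hjj : ∀ l, (single j 1 + single j 1 : σ →₀ ℕ) l ≤ N l := by
      grind [Finsupp.add_apply]
    have hcol := dotProduct_eq_zero_of_prod_lineBundleChern_eq_one h hjj
    exact ⟨j, by lia, congrFun (dotProduct_self_eq_zero.mp hcol)⟩
  · push Not at hlarge
    have hcard : Fintype.card ι < Fintype.card {j // N j ≠ 0} := calc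
      _ < ∑ j, N j := hlt
      _ ≤ ∑ j, if N j ≠ 0 then 1 else 0 := Finset.sum_le_sum fun j _ => by grind
      _ = _ := by rw [Finset.sum_boole, Fintype.card_subtype, Nat.cast_id]
    have horth : Pairwise fun p q : {j // N j ≠ 0} => (a · p.1) ⬝ᵥ (a · q.1) = 0 := by
      intro p q hpq
      refine dotProduct_eq_zero_of_prod_lineBundleChern_eq_one h fun l => ?_
      grind [Finsupp.add_apply]
    obtain ⟨j, hj⟩ := exists_eq_zero_of_pairwise_dotProduct_eq_zero
      (v := fun (j : {j // N j ≠ 0}) i => a i j) hcard horth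
    exact ⟨j, j.2, congrFun hj⟩

/-- algebraic core of Theorem 5.1: if `n < n_1 + ⋯ + n_k` and
`∏_{i=1}^{n} (1 + ∑_j a_{ij} x̄_j) = 1` in `ℤ[x_1,…,x_k]/(x_j^{n_j+1})`, then some column
of exponents `(a_{1j},…,a_{nj})` vanishes. -/
theorem stmt6 (n k : ℕ) (hn : 0 < n) (hk : 0 < k) (N : Fin k → ℕ) (hN : ∀ j, 0 < N j)
    (hlt : n < ∑ j, N j) (a : Fin n → Fin k → ℤ)
    (h : ∏ i : Fin n,
        Ideal.Quotient.mk (truncIdeal k N) (1 + ∑ j, C (a i j) * X j) = 1) :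
    ∃ j, ∀ i, a i j = 0 := by
  obtain ⟨j, -, hj⟩ := stmt6_general (by rwa [Fintype.card_fin]) h
  exact ⟨j, hj⟩
end

section
/- Let n, k ≥ 1 be integers, let n_1,…,n_k be positive integers, and let a_{ij} (1 ≤ i ≤ n, 1 ≤ j ≤ k) be integers such that ∏_{i=1}^{n} (1 + Σ_{j=1}^{k} a_{ij} x̄_j) = 1 in the ring ℤ[x_1,…,x_k]/(x_1^{n_1+1},…,x_k^{n_k+1}). If j is an index with n_j ≥ 2, then a_{ij} = 0 for every i = 1,…,n. -/
open MvPolynomial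

/-!
Restricting to the `j`-th factor, that is, setting every variable but `x_j` to zero, turns the
hypothesis into `∏ i, (1 + a i j * x) ≡ 1` modulo `x ^ 3`, so the first two Chern classes `c₁` and
`c₂` of this product vanish. Hence so does `c₁ ^ 2 - 2 * c₂ = ∑ i, a i j ^ 2`, and in a formally
real ring such as `ℤ` a sum of squares vanishes only if all its terms do.
-/

open scoped Polynomial

theorem eq_zero_of_sum_sq_eq_zero {ι R : Type*} [CommRing R] [IsFormallyReal R] {s : Finset ι}
    {b : ι → R} (h : ∑ i ∈ s, b i ^ 2 = 0) {i : ι} (hi : i ∈ s) : b i = 0 := by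
  classical
  rw [← Finset.add_sum_erase s _ hi] at h
  have sq_eq_zero : b i ^ 2 = 0 :=
    IsFormallyReal.eq_zero_of_add_right (IsSquare.sq (b i)).isSumSq (IsSumSq.sum_sq _ b) h
  exact eq_zero_of_pow_eq_zero sq_eq_zero

section SecondPowerSum

variable {ι R : Type*} [CommRing R]

/-- The second power sum `c₁² - 2c₂` of the Chern roots of a total Chern class `1 + c₁x + c₂x² + ⋯`,
given by Newton's identity. It is meant for polynomials with constant coefficient `1`, on which it
turns products into sums. -/
def secondPowerSum (p : R[X]) : R :=
  p.coeff 1 ^ 2 - 2 * p.coeff 2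

theorem secondPowerSum_mul {p q : R[X]} (hp : p.coeff 0 = 1) (hq : q.coeff 0 = 1) :
    secondPowerSum (p * q) = secondPowerSum p + secondPowerSum q := by
  have coeff_two : (p * q).coeff 2 = q.coeff 2 + p.coeff 1 * q.coeff 1 + p.coeff 2 := by
    simp [Polynomial.coeff_mul, Finset.Nat.antidiagonal_succ, hp, hq, add_assoc]
  rw [secondPowerSum, secondPowerSum, secondPowerSum, Polynomial.mul_coeff_one, coeff_two, hp, hq]
  ring

theorem secondPowerSum_prod (s : Finset ι) (p : ι → R[X]) (hp : ∀ i ∈ s, (p i).coeff 0 = 1) :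
    secondPowerSum (∏ i ∈ s, p i) = ∑ i ∈ s, secondPowerSum (p i) := by
  induction s using Finset.cons_induction with
  | empty => simp [secondPowerSum, Polynomial.coeff_one]
  | cons i s hi ih =>
    rw [Finset.forall_mem_cons] at hp
    have coeff_zero : (∏ l ∈ s, p l).coeff 0 = 1 := by
      rw [Polynomial.coeff_zero_prod, Finset.prod_eq_one hp.2]
    rw [Finset.prod_cons, Finset.sum_cons, secondPowerSum_mul hp.1 coeff_zero, ih hp.2]

theorem secondPowerSum_one_add_C_mul_X (b : R) :
    secondPowerSum (1 + Polynomial.C b * Polynomial.X) = b ^ 2 := by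
  simp [secondPowerSum, Polynomial.coeff_one]

theorem secondPowerSum_eq_zero_of_X_pow_three_dvd_sub_one {p : R[X]}
    (h : Polynomial.X ^ 3 ∣ p - 1) : secondPowerSum p = 0 := by
  rw [Polynomial.X_pow_dvd_iff] at h
  have coeff_one : p.coeff 1 = 0 := by simpa [Polynomial.coeff_one] using h 1 (by norm_num)
  have coeff_two : p.coeff 2 = 0 := by simpa [Polynomial.coeff_one] using h 2 (by norm_num)
  simp [secondPowerSum, coeff_one, coeff_two]

theorem sum_sq_eq_zero_of_X_pow_three_dvd_prod_sub_one {s : Finset ι} {b : ι → R}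
    (h : Polynomial.X ^ 3 ∣ ∏ i ∈ s, (1 + Polynomial.C (b i) * Polynomial.X) - 1) :
    ∑ i ∈ s, b i ^ 2 = 0 := by
  simpa [secondPowerSum_prod, secondPowerSum_one_add_C_mul_X] using
    secondPowerSum_eq_zero_of_X_pow_three_dvd_sub_one h

end SecondPowerSum

section AxisRestriction

variable {σ R : Type*} [CommSemiring R] [DecidableEq σ]

/-- Restriction of polynomial functions to the `j`-th coordinate axis: `X j` is kept as the variable
and every other variable is sent to `0`. On cohomology this is the pullback to the `j`-th factor of
a product of projective spaces. -/
noncomputable def axisRestriction (j : σ) : MvPolynomial σ R →ₐ[R] R[X] :=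
  aeval (Pi.single j Polynomial.X)

theorem axisRestriction_one_add_sum_C_mul_X [Fintype σ] (j : σ) (a : σ → R) :
    axisRestriction j (1 + ∑ l, C (a l) * X l) = 1 + Polynomial.C (a j) * Polynomial.X := by
  simp [axisRestriction, Pi.single_apply, Polynomial.algebraMap_eq]

theorem X_pow_dvd_axisRestriction {N : σ → ℕ} {p : MvPolynomial σ R}
    (hp : p ∈ Ideal.span (Set.range fun l => X l ^ (N l + 1))) (j : σ) :
    Polynomial.X ^ (N j + 1) ∣ axisRestriction j p := by
  suffices Ideal.span (Set.range fun l => X l ^ (N l + 1)) ≤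
      (Ideal.span {Polynomial.X ^ (N j + 1)}).comap (axisRestriction (R := R) j) from
    Ideal.mem_span_singleton.mp (this hp)
  rw [Ideal.span_le]
  rintro _ ⟨l, rfl⟩
  rw [SetLike.mem_coe, Ideal.mem_comap, Ideal.mem_span_singleton, map_pow, axisRestriction, aeval_X]
  obtain rfl | hl := eq_or_ne l j
  · rw [Pi.single_eq_same]
  · rw [Pi.single_eq_of_ne hl, zero_pow (Nat.succ_ne_zero _)]
    exact dvd_zero _

end AxisRestriction

theorem stmt7_general {ι σ R : Type*} [Fintype ι] [Fintype σ] [CommRing R] [IsFormallyReal R]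
    (N : σ → ℕ) (a : ι → σ → R)
    (h : ∏ i, Ideal.Quotient.mk (Ideal.span (Set.range fun j : σ => X j ^ (N j + 1)))
        (1 + ∑ j, C (a i j) * X j) = 1)
    (j : σ) (hj : 2 ≤ N j) (i : ι) : a i j = 0 := by
  classical
  rw [← map_prod, ← map_one (Ideal.Quotient.mk _), Ideal.Quotient.eq] at h
  have dvd_restriction : Polynomial.X ^ (N j + 1) ∣
      ∏ i, (1 + Polynomial.C (a i j) * Polynomial.X) - 1 := by
    simpa only [map_sub, map_prod, map_one, axisRestriction_one_add_sum_C_mul_X] using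
      X_pow_dvd_axisRestriction h j
  have X_pow_three_dvd : Polynomial.X ^ 3 ∣
      ∏ i, (1 + Polynomial.C (a i j) * Polynomial.X) - 1 :=
    (pow_dvd_pow _ (Nat.succ_le_succ hj)).trans dvd_restriction
  exact eq_zero_of_sum_sq_eq_zero
    (sum_sq_eq_zero_of_X_pow_three_dvd_prod_sub_one X_pow_three_dvd) (Finset.mem_univ i)

/-- Case I in the proof of Theorem 5.1: if
`∏_{i=1}^{n} (1 + ∑_j a_{ij} x̄_j) = 1` in `ℤ[x_1,…,x_k]/(x_j^{n_j+1})` and `n_j ≥ 2`,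
then `a_{ij} = 0` for every `i`. -/
theorem stmt7 (n k : ℕ) (hn : 0 < n) (hk : 0 < k) (N : Fin k → ℕ) (hN : ∀ j, 0 < N j)
    (a : Fin n → Fin k → ℤ)
    (h : ∏ i : Fin n,
        Ideal.Quotient.mk (truncIdeal k N) (1 + ∑ j, C (a i j) * X j) = 1)
    (j : Fin k) (hj : 2 ≤ N j) :
    ∀ i, a i j = 0 :=
  stmt7_general N a h j hj
end

section
/- Let a, a′ be integers. There exists a ring isomorphism φ : ℤ[x,y]/(x², y(y + a′x)) → ℤ[x,y]/(x², y(y + ax)) mapping the ℤ-span of {x̄, ȳ} onto the ℤ-span of {x̄, ȳ} if and only if a ≡ a′ (mod 2). -/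
/-!
Modulo 2 squaring is a ring homomorphism, so the elements of a commutative ring whose square is an
integer modulo 2 form a subring, which every ring homomorphism respects. In `ℤ[x,y]/(x², y(y + ax))`
this subring contains `x`, since `x² = 0`, and it contains `y` if and only if `a` is even, since
`y² = -axy` and `1`, `xy` are part of a `ℤ`-basis. Hence the parity of `a` is an invariant of the
ring. Conversely, the shear `x ↦ x`, `y ↦ y + kx` changes `a` by `2k` and preserves the grading.
-/

open MvPolynomial

/-- The ideal `(x², y(y + ax))` of `ℤ[x,y]` (with `x = X 0`, `y = X 1`), defining the
cohomology ring of the Hirzebruch surface `H_a`. -/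
noncomputable def hirzIdeal (a : ℤ) : Ideal (MvPolynomial (Fin 2) ℤ) :=
  Ideal.span {X 0 ^ 2, X 1 * (X 1 + C a * X 0)}

/-- The integral cohomology ring `ℤ[x,y]/(x², y(y + ax))` of the Hirzebruch surface `H_a`. -/
abbrev HirzRing (a : ℤ) : Type :=
  MvPolynomial (Fin 2) ℤ ⧸ hirzIdeal a

/-- The subring of elements whose square is congruent to an integer modulo 2; the invariant that
detects the parity of `a` in `HirzRing a`. -/
def intSquareModTwo (R : Type*) [CommRing R] : Subring R where
  carrier := {z | ∃ n : ℤ, 2 ∣ z ^ 2 - n}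
  one_mem' := ⟨1, by simp⟩
  zero_mem' := ⟨0, by simp⟩
  neg_mem' := by simp
  mul_mem' := by
    rintro z w ⟨m, r, hr⟩ ⟨n, s, hs⟩
    refine ⟨m * n, r * w ^ 2 + m * s, ?_⟩
    push_cast
    linear_combination w ^ 2 * hr + m * hs
  add_mem' := by
    rintro z w ⟨m, r, hr⟩ ⟨n, s, hs⟩
    refine ⟨m + n, r + s + z * w, ?_⟩
    push_cast
    linear_combination hr + hs

section CommRing

variable {R S : Type*} [CommRing R] [CommRing S]

lemma map_mem_intSquareModTwo (f : R →+* S) {z : R} (hz : z ∈ intSquareModTwo R) :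
    f z ∈ intSquareModTwo S := by
  obtain ⟨n, hn⟩ := hz
  exact ⟨n, by simpa only [map_ofNat, map_sub, map_pow, map_intCast] using map_dvd f hn⟩

lemma intSquareModTwo_eq_top_of_surjective {f : R →+* S} (hf : Function.Surjective f)
    (h : intSquareModTwo R = ⊤) : intSquareModTwo S = ⊤ := by
  refine (Subring.eq_top_iff' _).2 fun w => ?_
  obtain ⟨z, rfl⟩ := hf w
  exact map_mem_intSquareModTwo f (h ▸ Subring.mem_top z)

lemma intSquareModTwo_eq_top_congr (e : R ≃+* S) :
    intSquareModTwo R = ⊤ ↔ intSquareModTwo S = ⊤ :=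
  ⟨intSquareModTwo_eq_top_of_surjective (f := (e : R →+* S)) e.surjective,
    intSquareModTwo_eq_top_of_surjective (f := (e.symm : S →+* R)) e.symm.surjective⟩

lemma shear_mul_shear_add {u : R} (hu : u ^ 2 = 0) (v c k : R) :
    (v + k * u) * (v + k * u + c * u) = v * (v + (c + 2 * k) * u) := by
  linear_combination (k ^ 2 + k * c) * hu

end CommRing

lemma image_span_int {F M N : Type*} [AddCommGroup M] [AddCommGroup N] [FunLike F M N]
    [AddMonoidHomClass F M N] (f : F) (s : Set M) :
    f '' Submodule.span ℤ s = (Submodule.span ℤ (f '' s) : Set N) :=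
  congrArg SetLike.coe (Submodule.map_span (f : M →+ N).toIntLinearMap s)

lemma span_pair_add_smul {R M : Type*} [Ring R] [AddCommGroup M] [Module R M] (k : R) (u v : M) :
    Submodule.span R {u, v + k • u} = Submodule.span R {u, v} := by
  ext z
  simp only [Submodule.mem_span_pair]
  constructor
  · rintro ⟨p, q, rfl⟩
    exact ⟨p + q * k, q, by simp only [add_smul, mul_smul, smul_add]; abel⟩
  · rintro ⟨p, q, rfl⟩
    exact ⟨p - q * k, q, by simp only [sub_smul, mul_smul, smul_add]; abel⟩

namespace HirzRing

variable (a : ℤ)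

/-- The generator `x̄`: the class pulled back from the base `ℂP¹` of `H_a`. -/
noncomputable def x : HirzRing a := Ideal.Quotient.mk (hirzIdeal a) (X 0)

/-- The generator `ȳ`: the class restricting to a generator on the fibre `ℂP¹` of `H_a`. -/
noncomputable def y : HirzRing a := Ideal.Quotient.mk (hirzIdeal a) (X 1)

lemma x_sq : x a ^ 2 = 0 :=
  Ideal.Quotient.eq_zero_iff_mem.2 (Ideal.subset_span (Set.mem_insert _ _))

lemma y_mul_y_add : y a * (y a + a * x a) = 0 := by
  have h : Ideal.Quotient.mk (hirzIdeal a) (X 1 * (X 1 + C a * X 0)) = 0 :=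
    Ideal.Quotient.eq_zero_iff_mem.2 (Ideal.subset_span (Set.mem_insert_of_mem _ rfl))
  simpa [x, y] using h

variable {a}

lemma eq_top_of_mem {T : Subring (HirzRing a)} (hx : x a ∈ T) (hy : y a ∈ T) : T = ⊤ := by
  refine (Subring.eq_top_iff' T).2 fun z => ?_
  obtain ⟨p, rfl⟩ := Ideal.Quotient.mk_surjective z
  induction p using MvPolynomial.induction_on with
  | C n => simp
  | add p q hp hq => simpa only [map_add] using add_mem hp hq
  | mul_X p i hp =>
    rw [map_mul]
    fin_cases i
    exacts [mul_mem hp hx, mul_mem hp hy]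

section Lift

variable {R : Type*} [CommRing R]

lemma ringHom_ext {f g : HirzRing a →+* R} (hx : f (x a) = g (x a)) (hy : f (y a) = g (y a)) :
    f = g :=
  RingHom.eq_of_eqOn_set_top fun _ _ =>
    (eq_top_of_mem (T := f.eqLocus g) hx hy).ge trivial

/-- The ring homomorphism sending the generators `x̄`, `ȳ` to elements `u`, `v` satisfying the
defining relations. -/
noncomputable def lift {u v : R} (hu : u ^ 2 = 0) (hv : v * (v + a * u) = 0) : HirzRing a →+* R :=
  Ideal.Quotient.lift (hirzIdeal a) (eval₂Hom (Int.castRingHom R) ![u, v]) <| by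
    suffices hirzIdeal a ≤ RingHom.ker (eval₂Hom (Int.castRingHom R) ![u, v]) from
      fun p hp => this hp
    refine Ideal.span_le.2 ?_
    rintro _ (rfl | rfl)
    · simpa using hu
    · simpa [-eq_intCast] using hv

variable {u v : R} (hu : u ^ 2 = 0) (hv : v * (v + a * u) = 0)

@[simp]
lemma lift_x : lift hu hv (x a) = u :=
  (Ideal.Quotient.lift_mk ..).trans (by simp)

@[simp]
lemma lift_y : lift hu hv (y a) = v :=
  (Ideal.Quotient.lift_mk ..).trans (by simp)

end Lift

variable (a)

/-- The second cohomology group of `H_a`, spanned by the polynomials of degree one. -/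
noncomputable def linearPart : Submodule ℤ (HirzRing a) :=
  Submodule.span ℤ {x a, y a}

/-- The graded isomorphism `x̄ ↦ x̄`, `ȳ ↦ ȳ + kx̄`, which changes the parameter `a` by `2k`. -/
noncomputable def shear (k : ℤ) : HirzRing a ≃+* HirzRing (a + 2 * k) :=
  RingEquiv.ofRingHom
    (lift (v := y (a + 2 * k) + (k : HirzRing (a + 2 * k)) * x (a + 2 * k)) (x_sq _) <| by
      rw [← y_mul_y_add (a + 2 * k)]
      push_cast
      exact shear_mul_shear_add (x_sq _) ..)
    (lift (v := y a + ((-k : ℤ) : HirzRing a) * x a) (x_sq _) <| by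
      rw [shear_mul_shear_add (x_sq _), ← y_mul_y_add a]
      push_cast
      ring)
    (ringHom_ext (by simp) (by simp [add_assoc, ← add_mul]))
    (ringHom_ext (by simp) (by simp [add_assoc, ← add_mul]))

@[simp]
lemma shear_x (k : ℤ) : shear a k (x a) = x (a + 2 * k) := by
  simp [shear]

@[simp]
lemma shear_y (k : ℤ) : shear a k (y a) = y (a + 2 * k) + k • x (a + 2 * k) := by
  simp [shear]

lemma shear_image_linearPart (k : ℤ) :
    shear a k '' linearPart a = (linearPart (a + 2 * k) : Set (HirzRing (a + 2 * k))) := by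
  rw [linearPart, image_span_int, Set.image_pair, shear_x, shear_y, span_pair_add_smul, linearPart]

open DualNumber in
/-- The presentation of the cohomology of the projective bundle `H_a → ℂP¹` as a quadratic algebra
over the cohomology `ℤ[ε]` of the base. It makes the coordinates in the basis `1, x̄, ȳ, x̄ȳ`
accessible: the last one is `z.im.snd`. -/
noncomputable def toQuadraticAlgebra :
    HirzRing a →+* QuadraticAlgebra ℤ[ε] 0 (-(a : ℤ[ε]) * ε) :=
  lift (u := algebraMap ℤ[ε] _ ε) (v := QuadraticAlgebra.omega)
    (by rw [← map_pow, eps_pow_two, map_zero])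
    (by ext <;> simp)

variable {a}

lemma x_mem_intSquareModTwo : x a ∈ intSquareModTwo (HirzRing a) :=
  ⟨0, by simp [x_sq]⟩

lemma y_mem_intSquareModTwo (ha : Even a) : y a ∈ intSquareModTwo (HirzRing a) := by
  obtain ⟨b, rfl⟩ := ha
  refine ⟨0, -(b : HirzRing (b + b)) * x (b + b) * y (b + b), ?_⟩
  have h := y_mul_y_add (b + b)
  push_cast at h ⊢
  linear_combination h

lemma even_of_y_mem_intSquareModTwo (h : y a ∈ intSquareModTwo (HirzRing a)) : Even a := by
  obtain ⟨n, r, hr⟩ := map_mem_intSquareModTwo (toQuadraticAlgebra a) h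
  have h_coeff : -a = r.im.snd + r.im.snd := by
    simpa [sq, two_mul, toQuadraticAlgebra] using congrArg (fun z => z.im.snd) hr
  exact even_neg.1 ⟨_, h_coeff⟩

lemma intSquareModTwo_eq_top_iff : intSquareModTwo (HirzRing a) = ⊤ ↔ Even a :=
  ⟨fun h => even_of_y_mem_intSquareModTwo (h ▸ Subring.mem_top _),
    fun ha => eq_top_of_mem x_mem_intSquareModTwo (y_mem_intSquareModTwo ha)⟩

end HirzRing

theorem stmt12_general (a a' : ℤ) :
    [Nonempty (HirzRing a' ≃+* HirzRing a),
      ∃ φ : HirzRing a' ≃+* HirzRing a,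
        φ '' HirzRing.linearPart a' = (HirzRing.linearPart a : Set (HirzRing a)),
      a % 2 = a' % 2].TFAE := by
  tfae_have 1 → 3 := by
    rintro ⟨φ⟩
    have h : Even a' ↔ Even a := by
      simpa only [HirzRing.intSquareModTwo_eq_top_iff] using intSquareModTwo_eq_top_congr φ
    rw [Int.even_iff, Int.even_iff] at h
    omega
  tfae_have 3 → 2 := by
    intro h
    obtain ⟨k, rfl⟩ : ∃ k, a = a' + 2 * k := ⟨(a - a') / 2, by omega⟩
    exact ⟨HirzRing.shear a' k, HirzRing.shear_image_linearPart a' k⟩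
  tfae_have 2 → 1 := fun ⟨φ, _⟩ => ⟨φ⟩
  tfae_finish

/-- Case 2 of Theorem 6.1, `n₁ = n₂ = 1`: the cohomology rings of the
Hirzebruch surfaces `H_{a'}` and `H_a` are isomorphic as graded rings if and only if
`a ≡ a' (mod 2)`. -/
theorem stmt12 (a a' : ℤ) :
    (∃ φ : (MvPolynomial (Fin 2) ℤ ⧸ hirzIdeal a') ≃+*
        (MvPolynomial (Fin 2) ℤ ⧸ hirzIdeal a),
      φ '' (Submodule.span ℤ
          {Ideal.Quotient.mk (hirzIdeal a') (X 0),
           Ideal.Quotient.mk (hirzIdeal a') (X 1)} :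
            Set (MvPolynomial (Fin 2) ℤ ⧸ hirzIdeal a')) =
        (Submodule.span ℤ
          {Ideal.Quotient.mk (hirzIdeal a) (X 0),
           Ideal.Quotient.mk (hirzIdeal a) (X 1)} :
            Set (MvPolynomial (Fin 2) ℤ ⧸ hirzIdeal a))) ↔
    a % 2 = a' % 2 := by
  exact (stmt12_general a a').out 1 2
end

section
/- Let a, b, c be integers. If c(2b − ac) = 0, then (b ȳ_1 + c ȳ_2 + 2 ȳ_3)² = 0 in the ring ℤ[y_1,y_2,y_3]/(y_1², y_2(a y_1 + y_2), y_3(b y_1 + c y_2 + y_3)). -/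
/-!
Completing the square, `(u + 2z)² = u² + 4z(u + z)`, so the relation on `ȳ₃` reduces the square of
`b ȳ₁ + c ȳ₂ + 2 ȳ₃` to `(b ȳ₁ + c ȳ₂)²`. By the other two relations, this equals
`c(2b - ac) ȳ₁ȳ₂`.
-/

open MvPolynomial

/-- The ideal `(y₁², y₂(a y₁ + y₂), y₃(b y₁ + c y₂ + y₃))` of `ℤ[y₁,y₂,y₃]` (with
`yᵢ = X (i-1)`), defining the integral cohomology ring of the 3-stage Bott manifold
with twisting data `(a, b, c)`. -/
noncomputable def bott3Ideal (a b c : ℤ) : Ideal (MvPolynomial (Fin 3) ℤ) :=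
  Ideal.span {X 0 ^ 2, X 1 * (C a * X 0 + X 1),
    X 2 * (C b * X 0 + C c * X 1 + X 2)}

theorem add_two_mul_sq_of_mul_add_eq_zero {R : Type*} [CommSemiring R] {x z : R}
    (hz : z * (x + z) = 0) : (x + 2 * z) ^ 2 = x ^ 2 :=
  calc (x + 2 * z) ^ 2 = x ^ 2 + 4 * (z * (x + z)) := by ring
    _ = x ^ 2 := by rw [hz, mul_zero, add_zero]

theorem mul_add_mul_sq_of_sq_eq_zero_of_mul_add_eq_zero {R : Type*} [CommRing R] {a x y : R}
    (b c : R) (hx : x ^ 2 = 0) (hy : y * (a * x + y) = 0) :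
    (b * x + c * y) ^ 2 = c * (2 * b - a * c) * (x * y) := by
  linear_combination b ^ 2 * hx + c ^ 2 * hy

namespace bott3Ideal

variable (a b c : ℤ)

theorem mk_X_zero_sq : Ideal.Quotient.mk (bott3Ideal a b c) (X 0) ^ 2 = 0 := by
  rw [← map_pow, Ideal.Quotient.eq_zero_iff_mem]
  exact Ideal.subset_span (by simp)

theorem mk_X_one_mul_add :
    Ideal.Quotient.mk (bott3Ideal a b c) (X 1 * (C a * X 0 + X 1)) = 0 :=
  Ideal.Quotient.eq_zero_iff_mem.mpr (Ideal.subset_span (by simp))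

theorem mk_X_two_mul_add :
    Ideal.Quotient.mk (bott3Ideal a b c) (X 2 * (C b * X 0 + C c * X 1 + X 2)) = 0 :=
  Ideal.Quotient.eq_zero_iff_mem.mpr (Ideal.subset_span (by simp))

end bott3Ideal

theorem stmt17_general (a b c : ℤ) :
    Ideal.Quotient.mk (bott3Ideal a b c) (C b * X 0 + C c * X 1 + C 2 * X 2) ^ 2 =
      Ideal.Quotient.mk (bott3Ideal a b c) (C (c * (2 * b - a * c)) * (X 0 * X 1)) := by
  have h₁ := bott3Ideal.mk_X_zero_sq a b c
  have h₂ := bott3Ideal.mk_X_one_mul_add a b c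
  have h₃ := bott3Ideal.mk_X_two_mul_add a b c
  simp only [map_mul, map_add, map_sub, map_ofNat] at h₁ h₂ h₃ ⊢
  rw [add_two_mul_sq_of_mul_add_eq_zero h₃,
    mul_add_mul_sq_of_sq_eq_zero_of_mul_add_eq_zero _ _ h₁ h₂]

/-- implication (3) ⇒ (2) of Lemma 7.2: if `c(2b − ac) = 0`, then
`(b ȳ₁ + c ȳ₂ + 2 ȳ₃)² = 0` in the cohomology ring of the 3-stage Bott manifold. -/
theorem stmt17 (a b c : ℤ) (h : c * (2 * b - a * c) = 0) :
    (Ideal.Quotient.mk (bott3Ideal a b c) (C b * X 0 + C c * X 1 + C 2 * X 2)) ^ 2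
      = 0 := by
  rw [stmt17_general, h, C_0, zero_mul, map_zero]
end

section
/- Let a, b, c be integers. In the ring ℤ[y_1,y_2,y_3]/(y_1², y_2(a y_1 + y_2), y_3(b y_1 + c y_2 + y_3)) one has the identity (1 + ȳ_3²)·(1 + (ȳ_3 + b ȳ_1 + c ȳ_2)²) = 1 + c(2b − ac)·ȳ_1 ȳ_2. -/
open MvPolynomial

section CommRing

variable {R : Type*} [CommRing R]

theorem one_add_sq_mul_one_add_sq_of_mul_eq_zero {u v : R} (h : u * v = 0) :
    (1 + u ^ 2) * (1 + v ^ 2) = 1 + (v - u) ^ 2 := by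
  linear_combination (2 + u * v) * h

theorem mul_add_mul_sq_of_sq_eq_zero {a x y : R} (hx : x ^ 2 = 0) (hy : y * (a * x + y) = 0)
    (b c : R) : (b * x + c * y) ^ 2 = c * (2 * b - a * c) * (x * y) := by
  linear_combination b ^ 2 * hx + c ^ 2 * hy

theorem stmt18_general {a b c x y z : R} (hx : x ^ 2 = 0) (hy : y * (a * x + y) = 0)
    (hz : z * (b * x + c * y + z) = 0) :
    (1 + z ^ 2) * (1 + (z + b * x + c * y) ^ 2) = 1 + c * (2 * b - a * c) * (x * y) :=
  calc
    (1 + z ^ 2) * (1 + (z + b * x + c * y) ^ 2)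
    _ = (1 + z ^ 2) * (1 + (b * x + c * y + z) ^ 2) := by rw [add_assoc z, add_comm z]
    _ = 1 + (b * x + c * y + z - z) ^ 2 := one_add_sq_mul_one_add_sq_of_mul_eq_zero hz
    _ = 1 + (b * x + c * y) ^ 2 := by rw [add_sub_cancel_right]
    _ = 1 + c * (2 * b - a * c) * (x * y) := by rw [mul_add_mul_sq_of_sq_eq_zero hx hy]

end CommRing

namespace bott3Ideal

open Ideal.Quotient (mk eq_zero_iff_mem)

variable (a b c : ℤ)

theorem mk_X_zero_sq_eq_zero : mk (bott3Ideal a b c) (X 0) ^ 2 = 0 := by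
  rw [← map_pow]
  exact eq_zero_iff_mem.mpr (Ideal.subset_span (by simp))

theorem mk_X_one_mul_add_eq_zero :
    mk (bott3Ideal a b c) (X 1) *
      (mk (bott3Ideal a b c) (C a) * mk (bott3Ideal a b c) (X 0) +
        mk (bott3Ideal a b c) (X 1)) = 0 := by
  simp only [← map_mul, ← map_add]
  exact eq_zero_iff_mem.mpr (Ideal.subset_span (by simp))

theorem mk_X_two_mul_add_eq_zero :
    mk (bott3Ideal a b c) (X 2) *
      (mk (bott3Ideal a b c) (C b) * mk (bott3Ideal a b c) (X 0) +
        mk (bott3Ideal a b c) (C c) * mk (bott3Ideal a b c) (X 1) +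
        mk (bott3Ideal a b c) (X 2)) = 0 := by
  simp only [← map_mul, ← map_add]
  exact eq_zero_iff_mem.mpr (Ideal.subset_span (by simp))

end bott3Ideal

/-- Lemma 7.3: in the cohomology ring of the 3-stage Bott manifold one
has `(1 + ȳ₃²)(1 + (ȳ₃ + b ȳ₁ + c ȳ₂)²) = 1 + c(2b − ac) ȳ₁ ȳ₂`; i.e. the total
Pontrjagin class of `B₃` is `1 + c(2b − ac) y₁ y₂`. -/
theorem stmt18 (a b c : ℤ) :
    Ideal.Quotient.mk (bott3Ideal a b c)
        ((1 + X 2 ^ 2) * (1 + (X 2 + C b * X 0 + C c * X 1) ^ 2)) =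
      Ideal.Quotient.mk (bott3Ideal a b c)
        (1 + C (c * (2 * b - a * c)) * (X 0 * X 1)) := by
  simpa only [map_add, map_sub, map_mul, map_pow, map_one, map_ofNat] using
    stmt18_general (bott3Ideal.mk_X_zero_sq_eq_zero a b c)
      (bott3Ideal.mk_X_one_mul_add_eq_zero a b c) (bott3Ideal.mk_X_two_mul_add_eq_zero a b c)
end
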